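/- arXiv:2412.07413 — 3 statements merged into one kernel-verified Lean document; each statement's English description precedes it below -/
import Mathlib

section
/- Let H be a separable complex Hilbert space and let {e_n}_{n≥0} be a Riesz basis of H with frame constants 0 < a ≤ A, i.e. a‖u‖² ≤ ∑_{n=0}^∞ |⟨u, e_n⟩|² ≤ A‖u‖² for all u ∈ H. If {d_n}_{n≥0} is a sequence in H such that ∑_{n=0}^∞ ‖d_n − e_n‖² < a²/A, then {d_n}_{n≥0} is also a Riesz basis of H. -/
/-!
For `c ∈ ℓ²`, the series `∑ cᵢ eᵢ` vanishes exactly when `c` is orthogonal to the range of the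
analysis operator `T u = (⟪eᵢ, u⟫)ᵢ`. So independence of `e` says that `T` has dense range in `ℓ²`,
and the lower frame bound says that `√a ‖u‖ ≤ ‖T u‖`. By Cauchy-Schwarz the analysis operator
`K` of `d - e` satisfies `‖K u‖ ≤ √S ‖u‖` with `S = ∑ ‖dᵢ - eᵢ‖²`, so `‖K u‖ ≤ q ‖T u‖` with
`q = √(S / a)`, and `q < 1` because `S < a² / A ≤ a`. Such a relatively small perturbation keeps
`T + K`, the analysis operator of `d`, bounded below, and its range dense: if `c` is orthogonal to
the range of `T + K`, then `|⟪x, c⟫| ≤ q ‖x‖ ‖c‖` for `x` in the range of `T`, hence for every `x`,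
and `x = c` gives `c = 0`.
-/

open scoped ENNReal

/-- A sequence `e : ℕ → H` in a separable complex Hilbert space is a *Riesz basis* if
(i) it is complete, (ii) the vectors are independent (an `ℓ²` combination summing to `0`
has all coefficients zero), and (iii) there are frame constants `0 < a ≤ A` with
`a‖u‖² ≤ ∑ |⟨u, eₙ⟩|² ≤ A‖u‖²` for all `u`. -/
def IsRieszBasis {H : Type*} [NormedAddCommGroup H] [InnerProductSpace ℂ H]
    (e : ℕ → H) : Prop :=
  (∀ u : H, (∀ n : ℕ, (inner ℂ u (e n) : ℂ) = 0) → u = 0) ∧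
  (∀ c : ℕ → ℂ, Memℓp c 2 → HasSum (fun n => c n • e n) 0 → ∀ n, c n = 0) ∧
  (∃ a A : ℝ, 0 < a ∧ a ≤ A ∧ ∀ u : H,
    a * ‖u‖ ^ 2 ≤ ∑' n : ℕ, ‖(inner ℂ u (e n) : ℂ)‖ ^ 2 ∧
    ∑' n : ℕ, ‖(inner ℂ u (e n) : ℂ)‖ ^ 2 ≤ A * ‖u‖ ^ 2)

open scoped InnerProductSpace lp

section DenseRange

variable {𝕜 E F : Type*} [RCLike 𝕜] [AddCommMonoid E] [Module 𝕜 E]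
  [NormedAddCommGroup F] [InnerProductSpace 𝕜 F]

theorem eq_zero_of_dense_of_norm_inner_le_mul {s : Set F} (hs : Dense s) {q : ℝ} (hq : q < 1)
    {c : F} (h : ∀ x ∈ s, ‖⟪x, c⟫_𝕜‖ ≤ q * ‖x‖ * ‖c‖) : c = 0 := by
  have hclosed : IsClosed {x : F | ‖⟪x, c⟫_𝕜‖ ≤ q * ‖x‖ * ‖c‖} :=
    isClosed_le (by fun_prop) (by fun_prop)
  have hc : ‖⟪c, c⟫_𝕜‖ ≤ q * ‖c‖ * ‖c‖ := hclosed.closure_subset_iff.2 h (hs c)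
  rw [← inner_self_re_eq_norm, inner_self_eq_norm_mul_norm] at hc
  by_contra hne
  have hpos : 0 < ‖c‖ * ‖c‖ := mul_self_pos.2 (norm_ne_zero_iff.2 hne)
  nlinarith

theorem orthogonal_range_add_eq_bot [CompleteSpace F] {T K : E →ₗ[𝕜] F} {q : ℝ} (hq : q < 1)
    (hK : ∀ u, ‖K u‖ ≤ q * ‖T u‖) (hT : T.rangeᗮ = ⊥) : (T + K).rangeᗮ = ⊥ := by
  have hdense : Dense (T.range : Set F) := by
    rwa [Submodule.dense_iff_topologicalClosure_eq_top, Submodule.topologicalClosure_eq_top_iff]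
  refine (Submodule.eq_bot_iff _).2 fun c hc ↦ ?_
  refine eq_zero_of_dense_of_norm_inner_le_mul (𝕜 := 𝕜) hdense hq ?_
  rintro _ ⟨u, rfl⟩
  have horth : ⟪T u, c⟫_𝕜 + ⟪K u, c⟫_𝕜 = 0 := by
    rw [← inner_add_left]
    exact hc _ ⟨u, rfl⟩
  calc ‖⟪T u, c⟫_𝕜‖ = ‖⟪K u, c⟫_𝕜‖ := by rw [eq_neg_of_add_eq_zero_left horth, norm_neg]
    _ ≤ ‖K u‖ * ‖c‖ := norm_inner_le_norm _ _
    _ ≤ q * ‖T u‖ * ‖c‖ := by gcongr; exact hK u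

end DenseRange

theorem lp_norm_sq_eq_tsum {ι : Type*} {E : ι → Type*} [∀ i, NormedAddCommGroup (E i)]
    (f : lp E 2) : ‖f‖ ^ 2 = ∑' i, ‖f i‖ ^ 2 := by
  simpa using lp.norm_rpow_eq_tsum (p := 2) (by norm_num) f

section RieszBasis

variable {𝕜 ι H : Type*} [RCLike 𝕜] [NormedAddCommGroup H] [InnerProductSpace 𝕜 H]
  {e k : ι → H} {a A B C S : ℝ}

variable (𝕜) in
/-- `e` is a Bessel family with bound `B`: `∑ |⟪u, eᵢ⟫|² ≤ B ‖u‖²` for all `u`. Summability is a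
separate field because `∑'` is `0` on families that are not summable. -/
structure IsBesselWith (e : ι → H) (B : ℝ) : Prop where
  summable (u : H) : Summable fun i ↦ ‖⟪u, e i⟫_𝕜‖ ^ 2
  tsum_le (u : H) : ∑' i, ‖⟪u, e i⟫_𝕜‖ ^ 2 ≤ B * ‖u‖ ^ 2

variable (𝕜) in
/-- `e` is a Riesz basis with frame constants `a` and `A`: the notion of `IsRieszBasis` with
explicit constants, over an arbitrary index type and over `ℝ` or `ℂ`. Completeness of `e` is not a
field, since it follows from the lower frame bound. -/
structure IsRieszBasisWith (e : ι → H) (a A : ℝ) : Prop extends IsBesselWith 𝕜 e A where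
  pos : 0 < a
  le_tsum (u : H) : a * ‖u‖ ^ 2 ≤ ∑' i, ‖⟪u, e i⟫_𝕜‖ ^ 2
  independent (c : ι → 𝕜) : Memℓp c 2 → HasSum (fun i ↦ c i • e i) 0 → c = 0

namespace IsBesselWith

theorem of_summable_norm_sq (hk : Summable fun i ↦ ‖k i‖ ^ 2) :
    IsBesselWith 𝕜 k (∑' i, ‖k i‖ ^ 2) := by
  have hle (u : H) (i : ι) : ‖⟪u, k i⟫_𝕜‖ ^ 2 ≤ ‖k i‖ ^ 2 * ‖u‖ ^ 2 := by
    rw [mul_comm, ← mul_pow]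
    gcongr
    exact norm_inner_le_norm _ _
  have hsummable (u : H) : Summable fun i ↦ ‖⟪u, k i⟫_𝕜‖ ^ 2 :=
    .of_nonneg_of_le (fun _ ↦ by positivity) (hle u) (hk.mul_right _)
  exact ⟨hsummable, fun u ↦
    ((hsummable u).tsum_le_tsum (hle u) (hk.mul_right _)).trans_eq tsum_mul_right⟩

theorem memℓp_inner (h : IsBesselWith 𝕜 e B) (u : H) : Memℓp (fun i ↦ ⟪e i, u⟫_𝕜) 2 :=
  memℓp_gen <| by simpa [norm_inner_symm] using h.summable u

/-- The analysis operator `u ↦ (⟪eᵢ, u⟫)ᵢ` of a Bessel family `e`. The vector `u` stands in the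
second argument of the inner product, so that the operator is linear. -/
def analysis (h : IsBesselWith 𝕜 e B) : H →ₗ[𝕜] ℓ²(ι, 𝕜) where
  toFun u := ⟨fun i ↦ ⟪e i, u⟫_𝕜, h.memℓp_inner u⟩
  map_add' u v := by ext i; exact inner_add_right ..
  map_smul' r u := by ext i; exact inner_smul_right ..

theorem analysis_apply (h : IsBesselWith 𝕜 e B) (u : H) (i : ι) : h.analysis u i = ⟪e i, u⟫_𝕜 :=
  rfl

theorem norm_analysis_sq (h : IsBesselWith 𝕜 e B) (u : H) :
    ‖h.analysis u‖ ^ 2 = ∑' i, ‖⟪u, e i⟫_𝕜‖ ^ 2 := by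
  simp only [lp_norm_sq_eq_tsum, analysis_apply, norm_inner_symm]

theorem norm_analysis_le (h : IsBesselWith 𝕜 e B) (u : H) : ‖h.analysis u‖ ≤ √B * ‖u‖ := by
  rw [← Real.sqrt_sq (norm_nonneg u), ← Real.sqrt_mul' B (sq_nonneg _)]
  exact Real.le_sqrt_of_sq_le ((h.norm_analysis_sq u).trans_le (h.tsum_le u))

theorem hasSum_inner_smul (h : IsBesselWith 𝕜 e B) (u : H) (c : ℓ²(ι, 𝕜)) :
    HasSum (fun i ↦ ⟪u, c i • e i⟫_𝕜) ⟪h.analysis u, c⟫_𝕜 := by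
  simpa [analysis_apply, inner_smul_right] using lp.hasSum_inner (𝕜 := 𝕜) (h.analysis u) c

theorem norm_le_of_inner_analysis_eq (h : IsBesselWith 𝕜 e B) {x : H} {c : ℓ²(ι, 𝕜)}
    (hx : ∀ u, ⟪u, x⟫_𝕜 = ⟪h.analysis u, c⟫_𝕜) : ‖x‖ ≤ √B * ‖c‖ := by
  have hsq : ‖x‖ * ‖x‖ ≤ √B * ‖c‖ * ‖x‖ := calc
    ‖x‖ * ‖x‖ = ‖⟪h.analysis x, c⟫_𝕜‖ := by
      rw [← hx, ← inner_self_re_eq_norm, inner_self_eq_norm_mul_norm]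
    _ ≤ ‖h.analysis x‖ * ‖c‖ := norm_inner_le_norm _ _
    _ ≤ √B * ‖x‖ * ‖c‖ := by gcongr; exact h.norm_analysis_le x
    _ = √B * ‖c‖ * ‖x‖ := by ring
  rcases (norm_nonneg x).eq_or_lt with hzero | hpos
  · rw [← hzero]
    positivity
  · exact le_of_mul_le_mul_right hsq hpos

theorem hasSum_smul_iff (h : IsBesselWith 𝕜 e B) {c : ℓ²(ι, 𝕜)} {x : H} :
    HasSum (fun i ↦ c i • e i) x ↔ ∀ u, ⟪u, x⟫_𝕜 = ⟪h.analysis u, c⟫_𝕜 := by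
  classical
  refine ⟨fun hx u ↦ ((innerSL 𝕜 u).hasSum hx).unique (h.hasSum_inner_smul u c), fun hx ↦ ?_⟩
  have hbound (s : Finset ι) :
      ‖∑ i ∈ s, c i • e i - x‖ ≤ √B * ‖∑ i ∈ s, lp.single 2 i (c i) - c‖ := by
    refine h.norm_le_of_inner_analysis_eq fun u ↦ ?_
    simp only [inner_sub_right, inner_sum, hx, inner_smul_right, lp.inner_single_right,
      RCLike.inner_apply, analysis_apply, inner_conj_symm]
  have hc : HasSum (fun i ↦ lp.single 2 i (c i)) c := lp.hasSum_single (by norm_num) c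
  refine tendsto_iff_norm_sub_tendsto_zero.2 (squeeze_zero (fun _ ↦ norm_nonneg _) hbound ?_)
  simpa using (tendsto_iff_norm_sub_tendsto_zero.1 hc).const_mul √B

theorem independent_iff_orthogonal_range_eq_bot (h : IsBesselWith 𝕜 e B) :
    (∀ c : ι → 𝕜, Memℓp c 2 → HasSum (fun i ↦ c i • e i) 0 → c = 0) ↔
      h.analysis.rangeᗮ = ⊥ := by
  have hmem (c : ℓ²(ι, 𝕜)) : HasSum (fun i ↦ c i • e i) 0 ↔ c ∈ h.analysis.rangeᗮ := by
    simp [h.hasSum_smul_iff, Submodule.mem_orthogonal, eq_comm]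
  rw [Submodule.eq_bot_iff]
  exact ⟨fun he c hc ↦ Subtype.ext (he c (lp.memℓp c) ((hmem c).2 hc)),
    fun hbot c hc hsum ↦ congrArg Subtype.val (hbot ⟨c, hc⟩ ((hmem ⟨c, hc⟩).1 hsum))⟩

theorem of_analysis {T : H →ₗ[𝕜] ℓ²(ι, 𝕜)} (hT : ∀ u i, T u i = ⟪e i, u⟫_𝕜)
    (hC : ∀ u, ‖T u‖ ≤ C * ‖u‖) : IsBesselWith 𝕜 e (C ^ 2) where
  summable u := by
    simpa [hT, norm_inner_symm] using (memℓp_gen_iff (p := 2) (by norm_num)).1 (lp.memℓp (T u))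
  tsum_le u := calc
    ∑' i, ‖⟪u, e i⟫_𝕜‖ ^ 2 = ‖T u‖ ^ 2 := by
      simp only [lp_norm_sq_eq_tsum, hT, norm_inner_symm]
    _ ≤ (C * ‖u‖) ^ 2 := by gcongr; exact hC u
    _ = C ^ 2 * ‖u‖ ^ 2 := mul_pow ..

theorem add (he : IsBesselWith 𝕜 e A) (hk : IsBesselWith 𝕜 k B) :
    IsBesselWith 𝕜 (e + k) ((√A + √B) ^ 2) :=
  of_analysis (T := he.analysis + hk.analysis) (fun _ _ ↦ (inner_add_left ..).symm) fun u ↦ by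
    rw [add_mul]
    exact norm_add_le_of_le (he.norm_analysis_le u) (hk.norm_analysis_le u)

theorem analysis_add (he : IsBesselWith 𝕜 e A) (hk : IsBesselWith 𝕜 k B) :
    (he.add hk).analysis = he.analysis + hk.analysis := by
  ext u i
  exact inner_add_left ..

end IsBesselWith

namespace IsRieszBasisWith

theorem sqrt_mul_norm_le_norm_analysis (h : IsRieszBasisWith 𝕜 e a A) (u : H) :
    √a * ‖u‖ ≤ ‖h.analysis u‖ := by
  rw [← Real.sqrt_sq (norm_nonneg u), ← Real.sqrt_mul h.pos.le]
  exact Real.sqrt_le_iff.2 ⟨norm_nonneg _, (h.le_tsum u).trans_eq (h.norm_analysis_sq u).symm⟩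

theorem isRieszBasis [InnerProductSpace ℂ H] {e : ℕ → H} (h : IsRieszBasisWith ℂ e a A) :
    IsRieszBasis e := by
  refine ⟨fun u hu ↦ ?_, fun c hc hsum n ↦ congrFun (h.independent c hc hsum) n,
    a, max a A, h.pos, le_max_left .., fun u ↦ ⟨h.le_tsum u, (h.tsum_le u).trans ?_⟩⟩
  · have hle : a * ‖u‖ ^ 2 ≤ 0 := by simpa [hu] using h.le_tsum u
    simpa using nonpos_of_mul_nonpos_right hle h.pos
  · gcongr
    exact le_max_right ..

end IsRieszBasisWith

theorem IsRieszBasis.isRieszBasisWith [InnerProductSpace ℂ H] {e : ℕ → H} (he : IsRieszBasis e)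
    (ha : 0 < a) (hframe : ∀ u : H, a * ‖u‖ ^ 2 ≤ ∑' n, ‖⟪u, e n⟫_ℂ‖ ^ 2 ∧
      ∑' n, ‖⟪u, e n⟫_ℂ‖ ^ 2 ≤ A * ‖u‖ ^ 2) : IsRieszBasisWith ℂ e a A where
  pos := ha
  summable u := by
    by_contra hu
    have hle : a * ‖u‖ ^ 2 ≤ 0 := (hframe u).1.trans_eq (tsum_eq_zero_of_not_summable hu)
    have hzero : u = 0 := by simpa using nonpos_of_mul_nonpos_right hle ha
    exact hu (by simp [hzero, summable_zero])
  tsum_le u := (hframe u).2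
  le_tsum u := (hframe u).1
  independent c hc hsum := funext (he.2.1 c hc hsum)

theorem riesz_basis_stability_general {d : ι → H} (he : IsRieszBasisWith 𝕜 e a A)
    (hd : IsBesselWith 𝕜 (d - e) S) (hlt : S < a) :
    IsRieszBasisWith 𝕜 d ((√a - √S) ^ 2) ((√A + √S) ^ 2) := by
  obtain ⟨k, rfl⟩ : ∃ k, d = e + k := ⟨d - e, (add_sub_cancel e d).symm⟩
  rw [add_sub_cancel_left] at hd
  have ha : 0 < √a := Real.sqrt_pos.2 he.pos
  have hsqrt : √S < √a := (Real.sqrt_lt_sqrt_iff_of_pos he.pos).2 hlt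
  have hgap : 0 < √a - √S := sub_pos.2 hsqrt
  have hbessel := he.add hd
  have hlower (u : H) : (√a - √S) * ‖u‖ ≤ ‖hbessel.analysis u‖ := by
    rw [he.analysis_add hd, sub_mul]
    calc √a * ‖u‖ - √S * ‖u‖
      _ ≤ ‖he.analysis u‖ - ‖hd.analysis u‖ :=
        sub_le_sub (he.sqrt_mul_norm_le_norm_analysis u) (hd.norm_analysis_le u)
      _ ≤ ‖he.analysis u + hd.analysis u‖ := sub_le_iff_le_add.2 (norm_le_add_norm_add _ _)
  have hrelative (u : H) : ‖hd.analysis u‖ ≤ √S / √a * ‖he.analysis u‖ := calc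
    ‖hd.analysis u‖ ≤ √S * ‖u‖ := hd.norm_analysis_le u
    _ = √S / √a * (√a * ‖u‖) := by field_simp
    _ ≤ √S / √a * ‖he.analysis u‖ := by gcongr; exact he.sqrt_mul_norm_le_norm_analysis u
  refine ⟨hbessel, sq_pos_of_pos hgap, fun u ↦ ?_,
    hbessel.independent_iff_orthogonal_range_eq_bot.2 ?_⟩
  · rw [← hbessel.norm_analysis_sq, ← mul_pow]
    gcongr
    exact hlower u
  · rw [he.analysis_add hd]
    exact orthogonal_range_add_eq_bot ((div_lt_one ha).2 hsqrt) hrelative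
      (he.independent_iff_orthogonal_range_eq_bot.1 he.independent)

end RieszBasis

theorem riesz_basis_stability {H : Type*} [NormedAddCommGroup H] [InnerProductSpace ℂ H]
    [CompleteSpace H] [TopologicalSpace.SeparableSpace H]
    (e d : ℕ → H) (a A : ℝ) (ha : 0 < a) (haA : a ≤ A)
    (he : IsRieszBasis e)
    (hframe : ∀ u : H,
      a * ‖u‖ ^ 2 ≤ ∑' n : ℕ, ‖(inner ℂ u (e n) : ℂ)‖ ^ 2 ∧
      ∑' n : ℕ, ‖(inner ℂ u (e n) : ℂ)‖ ^ 2 ≤ A * ‖u‖ ^ 2)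
    (hsum : Summable fun n : ℕ => ‖d n - e n‖ ^ 2)
    (hlt : ∑' n : ℕ, ‖d n - e n‖ ^ 2 < a ^ 2 / A) :
    IsRieszBasis d := by
  have hratio : a ^ 2 / A ≤ a := (div_le_iff₀ (ha.trans_le haA)).2 (by nlinarith)
  exact (riesz_basis_stability_general (he.isRieszBasisWith ha hframe)
    (.of_summable_norm_sq (k := d - e) hsum) (hlt.trans_le hratio)).isRieszBasis
end

section
/- Let H be a separable complex Hilbert space and let {e_n}_{n≥0} be an orthonormal basis of H. If {d_n}_{n≥0} is a sequence in H such that ∑_{n=0}^∞ ‖d_n − e_n‖² < 1, then {d_n}_{n≥0} is a Riesz basis of H. -/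
open scoped ENNReal

/-! Let `s ^ 2 = ∑ ‖d i - e i‖ ^ 2 < 1`. For the orthonormal family `e`, both the analysis map
`u ↦ (⟪u, e i⟫)ᵢ` into `ℓ²` and the synthesis map `c ↦ ∑ c i • e i` out of `ℓ²` are isometric. By
Cauchy–Schwarz, replacing `e` by `d` moves either map by at most `s` in operator norm, so the maps
of `d` distort norms by factors between `1 - s > 0` and `1 + s`. The analysis map gives the frame
bounds and completeness, the synthesis map gives independence. -/

section SquareSummable

variable {ι 𝕜 E : Type*}

theorem memℓp_two_iff_summable_norm_sq [NormedAddCommGroup E] {f : ι → E} :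
    Memℓp f 2 ↔ Summable fun i => ‖f i‖ ^ 2 := by
  simpa using memℓp_gen_iff (p := 2) (f := f) (by norm_num)

theorem lp_two_norm_eq_sqrt_tsum {G : ι → Type*} [∀ i, NormedAddCommGroup (G i)] (f : lp G 2) :
    ‖f‖ = √(∑' i, ‖f i‖ ^ 2) := by
  simpa [Real.sqrt_eq_rpow] using lp.norm_eq_tsum_rpow (by norm_num) f

theorem abs_sqrt_tsum_norm_sq_sub_le [NormedAddCommGroup E] {f g : ι → E}
    (hg : Summable fun i => ‖g i‖ ^ 2) (hfg : Summable fun i => ‖f i - g i‖ ^ 2) :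
    |√(∑' i, ‖f i‖ ^ 2) - √(∑' i, ‖g i‖ ^ 2)| ≤ √(∑' i, ‖f i - g i‖ ^ 2) := by
  let g₂ : lp (fun _ : ι => E) 2 := ⟨g, memℓp_two_iff_summable_norm_sq.2 hg⟩
  let δ₂ : lp (fun _ : ι => E) 2 := ⟨f - g, memℓp_two_iff_summable_norm_sq.2 hfg⟩
  have minkowski := abs_norm_sub_norm_le (δ₂ + g₂) g₂
  rw [add_sub_cancel_right] at minkowski
  simpa only [lp_two_norm_eq_sqrt_tsum, lp.coeFn_add, g₂, δ₂, sub_add_cancel, Pi.sub_apply]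
    using minkowski

theorem norm_sum_smul_le_sqrt_mul_sqrt [NormedField 𝕜] [SeminormedAddCommGroup E]
    [NormedSpace 𝕜 E] {f : ι → E} (hf : Summable fun i => ‖f i‖ ^ 2) (c : ι → 𝕜) (F : Finset ι) :
    ‖∑ i ∈ F, c i • f i‖ ≤ √(∑' i, ‖f i‖ ^ 2) * √(∑ i ∈ F, ‖c i‖ ^ 2) :=
  calc ‖∑ i ∈ F, c i • f i‖
    _ ≤ ∑ i ∈ F, ‖f i‖ * ‖c i‖ :=
      norm_sum_le_of_le F fun i _ => by rw [norm_smul, mul_comm]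
    _ ≤ √(∑ i ∈ F, ‖f i‖ ^ 2) * √(∑ i ∈ F, ‖c i‖ ^ 2) := Real.sum_mul_le_sqrt_mul_sqrt _ _ _
    _ ≤ √(∑' i, ‖f i‖ ^ 2) * √(∑ i ∈ F, ‖c i‖ ^ 2) := by
      gcongr
      exact hf.sum_le_tsum F fun i _ => sq_nonneg _

theorem eq_zero_of_hasSum_smul_zero [NormedField 𝕜] [SeminormedAddCommGroup E]
    [NormedSpace 𝕜 E] {f : ι → E} {c : ι → 𝕜} {a : ℝ} (ha : 0 < a)
    (hlower : ∀ F : Finset ι, a * √(∑ i ∈ F, ‖c i‖ ^ 2) ≤ ‖∑ i ∈ F, c i • f i‖)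
    (hc : HasSum (fun i => c i • f i) 0) (i : ι) : c i = 0 := by
  have partial_sums_ge : ∀ᶠ F : Finset ι in Filter.atTop, a * ‖c i‖ ≤ ‖∑ j ∈ F, c j • f j‖ := by
    filter_upwards [Filter.eventually_ge_atTop {i}] with F hF
    refine le_trans ?_ (hlower F)
    gcongr
    exact Real.le_sqrt_of_sq_le <| Finset.single_le_sum (f := fun j => ‖c j‖ ^ 2)
      (fun j _ => sq_nonneg _) (Finset.singleton_subset_iff.1 hF)
  have norm_le_zero : a * ‖c i‖ ≤ 0 := ge_of_tendsto (by simpa using hc.norm) partial_sums_ge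
  exact norm_le_zero_iff.1 (nonpos_of_mul_nonpos_right norm_le_zero ha)

end SquareSummable

section InnerProduct

variable {ι 𝕜 H : Type*} [RCLike 𝕜]

section Bessel

variable [SeminormedAddCommGroup H] [InnerProductSpace 𝕜 H] {f : ι → H}

theorem norm_inner_sq_le (u v : H) : ‖inner 𝕜 u v‖ ^ 2 ≤ ‖v‖ ^ 2 * ‖u‖ ^ 2 := by
  rw [← mul_pow, mul_comm]
  gcongr
  exact norm_inner_le_norm u v

theorem summable_norm_inner_sq (hf : Summable fun i => ‖f i‖ ^ 2) (u : H) :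
    Summable fun i => ‖inner 𝕜 u (f i)‖ ^ 2 :=
  .of_nonneg_of_le (fun _ => sq_nonneg _) (fun i => norm_inner_sq_le u (f i)) (hf.mul_right _)

theorem sqrt_tsum_norm_inner_sq_le (hf : Summable fun i => ‖f i‖ ^ 2) (u : H) :
    √(∑' i, ‖inner 𝕜 u (f i)‖ ^ 2) ≤ √(∑' i, ‖f i‖ ^ 2) * ‖u‖ := by
  rw [← Real.sqrt_sq (norm_nonneg u), ← Real.sqrt_mul' _ (sq_nonneg _), ← tsum_mul_right]
  exact Real.sqrt_le_sqrt <| (summable_norm_inner_sq hf u).tsum_le_tsum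
    (fun i => norm_inner_sq_le u (f i)) (hf.mul_right _)

end Bessel

variable [NormedAddCommGroup H] [InnerProductSpace 𝕜 H] {d e : ι → H}

theorem hasSum_norm_inner_sq_of_hilbertBasis (b : HilbertBasis ι 𝕜 H) (u : H) :
    HasSum (fun i => ‖inner 𝕜 u (b i)‖ ^ 2) (‖u‖ ^ 2) := by
  simpa [b.repr_apply_apply, norm_inner_symm u] using lp.hasSum_norm (by norm_num) (b.repr u)

-- A `HilbertBasis` exists only in a complete space, so Parseval is read off in the completion.
theorem hasSum_norm_inner_sq_of_orthonormal_of_dense_span (he : Orthonormal 𝕜 e)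
    (hspan : Dense (Submodule.span 𝕜 (Set.range e) : Set H)) (u : H) :
    HasSum (fun i => ‖inner 𝕜 u (e i)‖ ^ 2) (‖u‖ ^ 2) := by
  let J : H →ₗᵢ[𝕜] UniformSpace.Completion H := UniformSpace.Completion.toComplₗᵢ
  have span_image_dense :
      Dense (Submodule.span 𝕜 (Set.range (J ∘ e)) : Set (UniformSpace.Completion H)) := by
    rw [Set.range_comp, ← LinearIsometry.coe_toLinearMap, Submodule.span_image]
    exact UniformSpace.Completion.denseRange_coe.dense_image J.continuous hspan
  let b := HilbertBasis.mk (he.comp_linearIsometry J)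
    (Submodule.dense_iff_topologicalClosure_eq_top.1 span_image_dense).ge
  simpa [b] using hasSum_norm_inner_sq_of_hilbertBasis b (J u)

theorem abs_sqrt_tsum_norm_inner_sq_sub_norm_le (he : Orthonormal 𝕜 e)
    (hspan : Dense (Submodule.span 𝕜 (Set.range e) : Set H))
    (hsum : Summable fun i => ‖d i - e i‖ ^ 2) (u : H) :
    |√(∑' i, ‖inner 𝕜 u (d i)‖ ^ 2) - ‖u‖| ≤ √(∑' i, ‖d i - e i‖ ^ 2) * ‖u‖ := by
  have parseval := hasSum_norm_inner_sq_of_orthonormal_of_dense_span he hspan u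
  calc |√(∑' i, ‖inner 𝕜 u (d i)‖ ^ 2) - ‖u‖|
    _ = |√(∑' i, ‖inner 𝕜 u (d i)‖ ^ 2) - √(∑' i, ‖inner 𝕜 u (e i)‖ ^ 2)| := by
      rw [parseval.tsum_eq, Real.sqrt_sq (norm_nonneg u)]
    _ ≤ √(∑' i, ‖inner 𝕜 u (d i - e i)‖ ^ 2) := by
      simpa only [inner_sub_right] using abs_sqrt_tsum_norm_sq_sub_le parseval.summable
        (by simpa only [inner_sub_right] using summable_norm_inner_sq hsum u)
    _ ≤ √(∑' i, ‖d i - e i‖ ^ 2) * ‖u‖ := sqrt_tsum_norm_inner_sq_le hsum u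

theorem tsum_norm_inner_sq_le_of_orthonormal_near (he : Orthonormal 𝕜 e)
    (hspan : Dense (Submodule.span 𝕜 (Set.range e) : Set H))
    (hsum : Summable fun i => ‖d i - e i‖ ^ 2) (u : H) :
    ∑' i, ‖inner 𝕜 u (d i)‖ ^ 2 ≤ (1 + √(∑' i, ‖d i - e i‖ ^ 2)) ^ 2 * ‖u‖ ^ 2 := by
  have near_isometry :=
    (abs_le.1 (abs_sqrt_tsum_norm_inner_sq_sub_norm_le he hspan hsum u)).2
  rw [← mul_pow]
  exact (Real.sqrt_le_left (by positivity)).1 (by linarith)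

theorem le_tsum_norm_inner_sq_of_orthonormal_near (he : Orthonormal 𝕜 e)
    (hspan : Dense (Submodule.span 𝕜 (Set.range e) : Set H))
    (hsum : Summable fun i => ‖d i - e i‖ ^ 2) (hle : √(∑' i, ‖d i - e i‖ ^ 2) ≤ 1) (u : H) :
    (1 - √(∑' i, ‖d i - e i‖ ^ 2)) ^ 2 * ‖u‖ ^ 2 ≤ ∑' i, ‖inner 𝕜 u (d i)‖ ^ 2 := by
  have near_isometry :=
    (abs_le.1 (abs_sqrt_tsum_norm_inner_sq_sub_norm_le he hspan hsum u)).1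
  rw [← mul_pow]
  exact (Real.le_sqrt (mul_nonneg (sub_nonneg.2 hle) (norm_nonneg u))
    (tsum_nonneg fun _ => sq_nonneg _)).1 (by linarith)

theorem eq_zero_of_forall_inner_eq_zero_of_orthonormal_near (he : Orthonormal 𝕜 e)
    (hspan : Dense (Submodule.span 𝕜 (Set.range e) : Set H))
    (hsum : Summable fun i => ‖d i - e i‖ ^ 2) (hlt : √(∑' i, ‖d i - e i‖ ^ 2) < 1) {u : H}
    (hu : ∀ i, inner 𝕜 u (d i) = 0) : u = 0 := by
  have norm_le : ‖u‖ ≤ √(∑' i, ‖d i - e i‖ ^ 2) * ‖u‖ := by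
    simpa [hu] using abs_sqrt_tsum_norm_inner_sq_sub_norm_le he hspan hsum u
  by_contra hu_ne
  exact norm_le.not_gt (mul_lt_of_lt_one_left (norm_pos_iff.2 hu_ne) hlt)

theorem abs_norm_sum_smul_sub_sqrt_le (he : Orthonormal 𝕜 e)
    (hsum : Summable fun i => ‖d i - e i‖ ^ 2) (c : ι → 𝕜) (F : Finset ι) :
    |‖∑ i ∈ F, c i • d i‖ - √(∑ i ∈ F, ‖c i‖ ^ 2)| ≤
      √(∑' i, ‖d i - e i‖ ^ 2) * √(∑ i ∈ F, ‖c i‖ ^ 2) := by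
  have pythagoras : ‖∑ i ∈ F, c i • e i‖ = √(∑ i ∈ F, ‖c i‖ ^ 2) := by
    rw [← he.orthogonalFamily.norm_sum c F, Real.sqrt_sq (norm_nonneg _)]
    rfl
  calc |‖∑ i ∈ F, c i • d i‖ - √(∑ i ∈ F, ‖c i‖ ^ 2)|
    _ ≤ ‖∑ i ∈ F, c i • d i - ∑ i ∈ F, c i • e i‖ := pythagoras ▸ abs_norm_sub_norm_le _ _
    _ = ‖∑ i ∈ F, c i • (d i - e i)‖ := by simp only [smul_sub, Finset.sum_sub_distrib]
    _ ≤ √(∑' i, ‖d i - e i‖ ^ 2) * √(∑ i ∈ F, ‖c i‖ ^ 2) :=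
      norm_sum_smul_le_sqrt_mul_sqrt hsum c F

theorem eq_zero_of_hasSum_smul_zero_of_orthonormal_near (he : Orthonormal 𝕜 e)
    (hsum : Summable fun i => ‖d i - e i‖ ^ 2) (hlt : √(∑' i, ‖d i - e i‖ ^ 2) < 1) {c : ι → 𝕜}
    (hc : HasSum (fun i => c i • d i) 0) (i : ι) : c i = 0 := by
  refine eq_zero_of_hasSum_smul_zero (sub_pos.2 hlt) (fun F => ?_) hc i
  linarith [(abs_le.1 (abs_norm_sum_smul_sub_sqrt_le he hsum c F)).1]

end InnerProduct

theorem riesz_basis_perturbation_of_orthonormal_basis_general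
    {H : Type*} [NormedAddCommGroup H] [InnerProductSpace ℂ H]
    (e d : ℕ → H) (he : Orthonormal ℂ e)
    (hspan : Dense (↑(Submodule.span ℂ (Set.range e)) : Set H))
    (hsum : Summable fun n : ℕ => ‖d n - e n‖ ^ 2)
    (hlt : ∑' n : ℕ, ‖d n - e n‖ ^ 2 < 1) :
    IsRieszBasis d := by
  have sqrt_lt_one : √(∑' n, ‖d n - e n‖ ^ 2) < 1 := by rwa [Real.sqrt_lt' one_pos, one_pow]
  have sqrt_nonneg : 0 ≤ √(∑' n, ‖d n - e n‖ ^ 2) := Real.sqrt_nonneg _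
  refine ⟨fun u hu => ?complete, fun c _ hc => ?independent, _, _, ?pos, ?le,
    fun u => ⟨le_tsum_norm_inner_sq_of_orthonormal_near he hspan hsum sqrt_lt_one.le u,
      tsum_norm_inner_sq_le_of_orthonormal_near he hspan hsum u⟩⟩
  case complete =>
    exact eq_zero_of_forall_inner_eq_zero_of_orthonormal_near he hspan hsum sqrt_lt_one hu
  case independent =>
    exact eq_zero_of_hasSum_smul_zero_of_orthonormal_near he hsum sqrt_lt_one hc
  case pos => exact pow_pos (sub_pos.2 sqrt_lt_one) 2
  case le => nlinarith

theorem riesz_basis_perturbation_of_orthonormal_basis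
    {H : Type*} [NormedAddCommGroup H] [InnerProductSpace ℂ H]
    [CompleteSpace H] [TopologicalSpace.SeparableSpace H]
    (e d : ℕ → H) (he : Orthonormal ℂ e)
    (hspan : Dense (↑(Submodule.span ℂ (Set.range e)) : Set H))
    (hsum : Summable fun n : ℕ => ‖d n - e n‖ ^ 2)
    (hlt : ∑' n : ℕ, ‖d n - e n‖ ^ 2 < 1) :
    IsRieszBasis d :=
  riesz_basis_perturbation_of_orthonormal_basis_general e d he hspan hsum hlt
end

section
/- Let p₁, p₂ be continuously differentiable real-valued functions on [0,1], let q₁, q₂ be continuous real-valued functions on [0,1], let λ₁, λ₂ ∈ ℝ, and let y₁, y₂ be real-valued C⁴ functions on [0,1] such that y_i''''(x) − (p_i(x) y_i'(x))' + q_i(x) y_i(x) = λ_i y_i(x) for all x ∈ [0,1] and i = 1,2, and both satisfy the Dirichlet–Neumann boundary conditions y_i(0) = y_i''(0) = y_i'(1) = y_i'''(1) = 0. Then (λ₁ − λ₂) ∫₀¹ y₁(x) y₂(x) dx = ∫₀¹ (p₁(x) − p₂(x)) y₁'(x) y₂'(x) dx + ∫₀¹ (q₁(x) − q₂(x)) y₁(x)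 y₂(x) dx. -/
open Real

/-!
Test the equation for `y` against a function `z` with `z(a) = z'(b) = 0` and integrate by parts:
the remaining boundary terms vanish because `y''(a) = y'(b) = y'''(b) = 0`, so
`l ∫ y z = ∫ y'' z'' + ∫ p y' z' + ∫ q y z`. The right-hand side is symmetric in `y` and `z`.
Testing each equation against the other solution and subtracting cancels the term
`∫ y₁'' y₂''` and leaves the identity.
-/

open MeasureTheory intervalIntegral
open scoped Interval

theorem integral_deriv_mul_eq_neg {R : Type*} [NormedRing R] [NormedAlgebra ℝ R] [CompleteSpace R]
    {a b : ℝ} {u v : ℝ → R} (hu : ContDiff ℝ 1 u) (hv : ContDiff ℝ 1 v)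
    (hva : v a = 0) (hub : u b = 0) :
    ∫ x in a..b, deriv u x * v x = -∫ x in a..b, u x * deriv v x := by
  have hparts := integral_mul_deriv_eq_deriv_mul
    (fun x _ => (hu.differentiable one_ne_zero x).hasDerivAt)
    (fun x _ => (hv.differentiable one_ne_zero x).hasDerivAt)
    (hu.continuous_deriv_one.intervalIntegrable a b)
    (hv.continuous_deriv_one.intervalIntegrable a b)
  simp only [hparts, hva, hub, mul_zero, zero_mul, sub_self, zero_sub, neg_neg]

section FourthOrder

variable {A : Type*} [NormedCommRing A] [NormedAlgebra ℝ A] {a b : ℝ}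

/-- The differential expression `y'''' - (p y')' + q y`. -/
noncomputable def fourthOrderOp (p q y : ℝ → A) (x : ℝ) : A :=
  iteratedDeriv 4 y x - deriv (fun t => p t * deriv y t) x + q x * y x

/-- The bilinear form associated with `fourthOrderOp p q` on the interval from `a` to `b`. It is a
sum of three integrals, not the integral of a sum, so that terms common to two forms cancel without
integrability assumptions. -/
noncomputable def fourthOrderForm (a b : ℝ) (p q y z : ℝ → A) : A :=
  (∫ x in a..b, iteratedDeriv 2 y x * iteratedDeriv 2 z x) +
    (∫ x in a..b, p x * deriv y x * deriv z x) + ∫ x in a..b, q x * y x * z x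

/-- The Dirichlet–Neumann boundary conditions for fourth-order problems: Dirichlet type at `a`,
Neumann type at `b`. -/
def DirichletNeumannBC (a b : ℝ) (y : ℝ → A) : Prop :=
  y a = 0 ∧ iteratedDeriv 2 y a = 0 ∧ deriv y b = 0 ∧ iteratedDeriv 3 y b = 0

theorem fourthOrderForm_comm (p q y z : ℝ → A) :
    fourthOrderForm a b p q y z = fourthOrderForm a b p q z y := by
  simp only [fourthOrderForm, mul_comm (iteratedDeriv 2 y _), mul_right_comm (p _),
    mul_right_comm (q _)]

theorem fourthOrderForm_sub {p₁ p₂ q₁ q₂ y z : ℝ → A}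
    (hp₁ : IntervalIntegrable (fun x => p₁ x * deriv y x * deriv z x) volume a b)
    (hp₂ : IntervalIntegrable (fun x => p₂ x * deriv y x * deriv z x) volume a b)
    (hq₁ : IntervalIntegrable (fun x => q₁ x * y x * z x) volume a b)
    (hq₂ : IntervalIntegrable (fun x => q₂ x * y x * z x) volume a b) :
    fourthOrderForm a b p₁ q₁ y z - fourthOrderForm a b p₂ q₂ y z =
      (∫ x in a..b, (p₁ x - p₂ x) * deriv y x * deriv z x) +
        ∫ x in a..b, (q₁ x - q₂ x) * y x * z x := by
  simp only [sub_mul, integral_sub hp₁ hp₂, integral_sub hq₁ hq₂, fourthOrderForm]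
  ring

theorem intervalIntegrable_flux_mul {p y z : ℝ → A} (hpy : Continuous fun t => p t * deriv y t)
    (hz : ContDiff ℝ 1 z) :
    IntervalIntegrable (fun x => p x * deriv y x * deriv z x) volume a b :=
  (hpy.mul hz.continuous_deriv_one).intervalIntegrable a b

theorem intervalIntegrable_potential_mul {p q y z : ℝ → A} {l : A} (hy : ContDiff ℝ 4 y)
    (hpy : ContDiff ℝ 1 (fun t => p t * deriv y t)) (hz : Continuous z)
    (heq : ∀ x ∈ [[a, b]], fourthOrderOp p q y x = l * y x) :
    IntervalIntegrable (fun x => q x * y x * z x) volume a b := by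
  -- The equation expresses `q y` through continuous functions.
  have hcont : Continuous fun x =>
      (l * y x - iteratedDeriv 4 y x + deriv (fun t => p t * deriv y t) x) * z x := by
    have := hpy.continuous_deriv_one
    have := hy.continuous
    have := hy.continuous_iteratedDeriv' 4
    fun_prop
  refine (hcont.intervalIntegrable a b).congr fun x hx => ?_
  have h := heq x (Set.uIoc_subset_uIcc hx)
  rw [fourthOrderOp] at h
  linear_combination -z x * h

variable [CompleteSpace A]

theorem integral_iteratedDeriv_four_mul {y z : ℝ → A} (hy : ContDiff ℝ 4 y) (hz : ContDiff ℝ 2 z)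
    (hya₂ : iteratedDeriv 2 y a = 0) (hyb₃ : iteratedDeriv 3 y b = 0)
    (hza : z a = 0) (hzb₁ : deriv z b = 0) :
    ∫ x in a..b, iteratedDeriv 4 y x * z x =
      ∫ x in a..b, iteratedDeriv 2 y x * iteratedDeriv 2 z x := by
  have hyD₂ : ContDiff ℝ 1 (iteratedDeriv 2 y) :=
    (contDiff_nat_succ_iff_contDiff_one_iteratedDeriv.1 (hy.of_le (by norm_num))).2
  have hyD₃ : ContDiff ℝ 1 (iteratedDeriv 3 y) :=
    (contDiff_nat_succ_iff_contDiff_one_iteratedDeriv.1 hy).2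
  calc ∫ x in a..b, iteratedDeriv 4 y x * z x
      = -∫ x in a..b, iteratedDeriv 3 y x * deriv z x := by
        rw [iteratedDeriv_succ]
        exact integral_deriv_mul_eq_neg hyD₃ (hz.of_le one_le_two) hza hyb₃
    _ = -∫ x in a..b, deriv z x * deriv (iteratedDeriv 2 y) x := by
        simp only [mul_comm, ← iteratedDeriv_succ, Nat.reduceAdd]
    _ = ∫ x in a..b, deriv (deriv z) x * iteratedDeriv 2 y x :=
        (integral_deriv_mul_eq_neg hz.deriv' hyD₂ hya₂ hzb₁).symm
    _ = ∫ x in a..b, iteratedDeriv 2 y x * iteratedDeriv 2 z x := by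
        simp only [mul_comm, iteratedDeriv_succ (n := 1) (f := z), iteratedDeriv_one]

theorem mul_integral_eq_fourthOrderForm {p q y z : ℝ → A} {l : A} (hy : ContDiff ℝ 4 y)
    (hpy : ContDiff ℝ 1 (fun t => p t * deriv y t)) (hz : ContDiff ℝ 2 z)
    (heq : ∀ x ∈ [[a, b]], fourthOrderOp p q y x = l * y x)
    (hya₂ : iteratedDeriv 2 y a = 0) (hyb₁ : deriv y b = 0) (hyb₃ : iteratedDeriv 3 y b = 0)
    (hza : z a = 0) (hzb₁ : deriv z b = 0) :
    l * ∫ x in a..b, y x * z x = fourthOrderForm a b p q y z := by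
  have hyz : IntervalIntegrable (fun x => y x * z x) volume a b :=
    (hy.continuous.mul hz.continuous).intervalIntegrable a b
  have hy₄z : IntervalIntegrable (fun x => iteratedDeriv 4 y x * z x) volume a b :=
    ((hy.continuous_iteratedDeriv' 4).mul hz.continuous).intervalIntegrable a b
  have hdpyz : IntervalIntegrable (fun x => deriv (fun t => p t * deriv y t) x * z x) volume a b :=
    (hpy.continuous_deriv_one.mul hz.continuous).intervalIntegrable a b
  have hqyz := intervalIntegrable_potential_mul hy hpy hz.continuous heq
  calc l * ∫ x in a..b, y x * z x
      = ∫ x in a..b, l * (y x * z x) :=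
        ((ContinuousLinearMap.mul ℝ A l).intervalIntegral_comp_comm hyz).symm
    _ = ∫ x in a..b, (iteratedDeriv 4 y x * z x - deriv (fun t => p t * deriv y t) x * z x +
          q x * y x * z x) := by
        refine integral_congr fun x hx => ?_
        simp only [← mul_assoc, ← heq x hx, fourthOrderOp, sub_mul, add_mul]
    _ = (∫ x in a..b, iteratedDeriv 4 y x * z x) -
          (∫ x in a..b, deriv (fun t => p t * deriv y t) x * z x) +
          ∫ x in a..b, q x * y x * z x := by
        rw [integral_add (hy₄z.sub hdpyz) hqyz, integral_sub hy₄z hdpyz]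
    _ = fourthOrderForm a b p q y z := by
        rw [integral_iteratedDeriv_four_mul hy hz hya₂ hyb₃ hza hzb₁,
          integral_deriv_mul_eq_neg hpy (hz.of_le one_le_two) hza (by rw [hyb₁, mul_zero]),
          sub_neg_eq_add, fourthOrderForm]

theorem form_identity_dirichlet_neumann_general {p₁ p₂ q₁ q₂ y₁ y₂ : ℝ → A} {l₁ l₂ : A}
    (hy₁ : ContDiff ℝ 4 y₁) (hy₂ : ContDiff ℝ 4 y₂)
    (hpy₁ : ContDiff ℝ 1 (fun t => p₁ t * deriv y₁ t))
    (hpy₂ : ContDiff ℝ 1 (fun t => p₂ t * deriv y₂ t))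
    (heq₁ : ∀ x ∈ [[a, b]], fourthOrderOp p₁ q₁ y₁ x = l₁ * y₁ x)
    (heq₂ : ∀ x ∈ [[a, b]], fourthOrderOp p₂ q₂ y₂ x = l₂ * y₂ x)
    (hbc₁ : DirichletNeumannBC a b y₁) (hbc₂ : DirichletNeumannBC a b y₂) :
    (l₁ - l₂) * ∫ x in a..b, y₁ x * y₂ x =
      (∫ x in a..b, (p₁ x - p₂ x) * deriv y₁ x * deriv y₂ x) +
        ∫ x in a..b, (q₁ x - q₂ x) * y₁ x * y₂ x := by
  obtain ⟨hy₁a, hy₁a₂, hy₁b₁, hy₁b₃⟩ := hbc₁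
  obtain ⟨hy₂a, hy₂a₂, hy₂b₁, hy₂b₃⟩ := hbc₂
  have hweak₁ : l₁ * ∫ x in a..b, y₁ x * y₂ x = fourthOrderForm a b p₁ q₁ y₁ y₂ :=
    mul_integral_eq_fourthOrderForm hy₁ hpy₁ (hy₂.of_le (by norm_num)) heq₁
      hy₁a₂ hy₁b₁ hy₁b₃ hy₂a hy₂b₁
  have hweak₂ : l₂ * ∫ x in a..b, y₁ x * y₂ x = fourthOrderForm a b p₂ q₂ y₁ y₂ := by
    simp only [mul_comm (y₁ _), fourthOrderForm_comm p₂ q₂ y₁]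
    exact mul_integral_eq_fourthOrderForm hy₂ hpy₂ (hy₁.of_le (by norm_num)) heq₂
      hy₂a₂ hy₂b₁ hy₂b₃ hy₁a hy₁b₁
  have hp₁ : IntervalIntegrable (fun x => p₁ x * deriv y₁ x * deriv y₂ x) volume a b :=
    intervalIntegrable_flux_mul hpy₁.continuous (hy₂.of_le (by norm_num))
  have hp₂ : IntervalIntegrable (fun x => p₂ x * deriv y₁ x * deriv y₂ x) volume a b := by
    simpa only [mul_right_comm] using
      intervalIntegrable_flux_mul hpy₂.continuous (hy₁.of_le (by norm_num))
  have hq₁ : IntervalIntegrable (fun x => q₁ x * y₁ x * y₂ x) volume a b :=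
    intervalIntegrable_potential_mul hy₁ hpy₁ hy₂.continuous heq₁
  have hq₂ : IntervalIntegrable (fun x => q₂ x * y₁ x * y₂ x) volume a b := by
    simpa only [mul_right_comm] using
      intervalIntegrable_potential_mul hy₂ hpy₂ hy₁.continuous heq₂
  rw [sub_mul, hweak₁, hweak₂, fourthOrderForm_sub hp₁ hp₂ hq₁ hq₂]

end FourthOrder

theorem form_identity_dirichlet_neumann
    (p₁ p₂ q₁ q₂ y₁ y₂ : ℝ → ℝ) (l₁ l₂ : ℝ)
    (hp₁ : ContDiff ℝ 1 p₁) (hp₂ : ContDiff ℝ 1 p₂)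
    (hq₁ : Continuous q₁) (hq₂ : Continuous q₂)
    (hy₁ : ContDiff ℝ 4 y₁) (hy₂ : ContDiff ℝ 4 y₂)
    (heq₁ : ∀ x ∈ Set.Icc (0 : ℝ) 1,
      iteratedDeriv 4 y₁ x - deriv (fun t => p₁ t * deriv y₁ t) x + q₁ x * y₁ x = l₁ * y₁ x)
    (heq₂ : ∀ x ∈ Set.Icc (0 : ℝ) 1,
      iteratedDeriv 4 y₂ x - deriv (fun t => p₂ t * deriv y₂ t) x + q₂ x * y₂ x = l₂ * y₂ x)
    (hbc₁ : y₁ 0 = 0 ∧ iteratedDeriv 2 y₁ 0 = 0 ∧ deriv y₁ 1 = 0 ∧ iteratedDeriv 3 y₁ 1 = 0)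
    (hbc₂ : y₂ 0 = 0 ∧ iteratedDeriv 2 y₂ 0 = 0 ∧ deriv y₂ 1 = 0 ∧ iteratedDeriv 3 y₂ 1 = 0) :
    (l₁ - l₂) * ∫ x in (0:ℝ)..1, y₁ x * y₂ x =
      (∫ x in (0:ℝ)..1, (p₁ x - p₂ x) * deriv y₁ x * deriv y₂ x) +
        ∫ x in (0:ℝ)..1, (q₁ x - q₂ x) * y₁ x * y₂ x := by
  rw [← Set.uIcc_of_le zero_le_one] at heq₁ heq₂
  exact form_identity_dirichlet_neumann_general hy₁ hy₂ (hp₁.mul (hy₁.of_le (by norm_num)).deriv')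
    (hp₂.mul (hy₂.of_le (by norm_num)).deriv') heq₁ heq₂ hbc₁ hbc₂
end
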